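/- Let occ(σ) be the number of occurrences in σ of the mesh pattern Nr. 20, where an occurrence is a pair of indices i < j with a = σ_i < σ_j = b such that: i = 1 (there is no position before i); every element strictly between positions i and j has value less than a; and every element after position j has value greater than b. Let E(t,u) = Σ_{n≥0} t^n Σ_{σ∈K_n} u^{occ(σ)}. Then (1+t)^2·E(t,u) = ((1+t)^2 + t^2(1−u)(1+t) − t^2(1−u)·A(t))·A(t) as formal power series in t over ℚ[u]. -/

import Mathlib

/-- A permutation of `{0, …, n-1}` is a *king permutation* if consecutive entries
differ by more than 1 in absolute value. -/
def IsKing {n : ℕ} (σ : Equiv.Perm (Fin n)) : Prop :=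
  ∀ i : Fin n, ∀ h : (i : ℕ) + 1 < n,
    1 < |((σ ⟨(i : ℕ) + 1, h⟩ : ℕ) : ℤ) - ((σ i : ℕ) : ℤ)|

/-- `kingCount n = A_n`, the number of king permutations of length `n`. -/
noncomputable def kingCount (n : ℕ) : ℕ :=
  Nat.card {σ : Equiv.Perm (Fin n) // IsKing σ}

/-- `A(t)` regarded as a power series over `ℚ[u]` (constant-polynomial coefficients). -/
noncomputable def kingAu : PowerSeries (Polynomial ℚ) :=
  PowerSeries.mk fun n => (kingCount n : Polynomial ℚ)

/-- `u` viewed as a constant power series over `ℚ[u]`. -/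
noncomputable def U : PowerSeries (Polynomial ℚ) :=
  PowerSeries.C (R := Polynomial ℚ) Polynomial.X

/-- `t`, the power series variable. -/
noncomputable def T : PowerSeries (Polynomial ℚ) :=
  PowerSeries.X

/-- An occurrence of the mesh pattern Nr. 20 in `σ`. -/
def OccP {n : ℕ} (σ : Equiv.Perm (Fin n)) (i j : Fin n) : Prop :=
  i < j ∧ σ i < σ j ∧
    (∀ k : Fin n, ¬ k < i) ∧
    (∀ k : Fin n, i < k → k < j → σ k < σ i) ∧
    (∀ k : Fin n, j < k → σ j < σ k)

/-- The number of occurrences of the mesh pattern Nr. 20 in `σ`. -/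
noncomputable def occP {n : ℕ} (σ : Equiv.Perm (Fin n)) : ℕ :=
  Nat.card {p : Fin n × Fin n // OccP σ p.1 p.2}

-- `E(t,u) = Σ_{n≥0} t^n Σ_{σ∈K_n} u^{occ(σ)}`, a power series in `t` over `ℚ[u]`.
open Classical in
noncomputable def Etu : PowerSeries (Polynomial ℚ) :=
  PowerSeries.mk fun n =>
    ∑ σ : Equiv.Perm (Fin n),
      if IsKing σ then (Polynomial.X : Polynomial ℚ) ^ occP σ else 0


def StartMin {n : ℕ} (σ : Equiv.Perm (Fin n)) : Prop :=
  ∃ i : Fin n, (i : ℕ) = 0 ∧ (σ i : ℕ) = 0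

def StartMax {n : ℕ} (σ : Equiv.Perm (Fin n)) : Prop :=
  ∃ i : Fin n, (i : ℕ) = 0 ∧ (σ i : ℕ) + 1 = n

noncomputable def minCount (n : ℕ) : ℕ :=
  Nat.card {σ : Equiv.Perm (Fin n) // IsKing σ ∧ StartMin σ}

/-- occurrence whose second position is `p`. -/
def OccAt {n : ℕ} (p : ℕ) (σ : Equiv.Perm (Fin n)) : Prop :=
  ∃ i j : Fin n, (j : ℕ) = p ∧ OccP σ i j

theorem isKing_iff {n : ℕ} (σ : Equiv.Perm (Fin n)) :
    IsKing σ ↔ ∀ i j : Fin n, (j : ℕ) = i + 1 →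
      ((σ i : ℕ) + 1 < σ j ∨ (σ j : ℕ) + 1 < σ i) := by
  unfold IsKing
  constructor
  · intro h i j hij
    have hj := j.isLt
    have h1 := h i (by omega)
    have : (⟨(i : ℕ) + 1, by omega⟩ : Fin n) = j := Fin.ext hij.symm
    rw [this, lt_abs] at h1
    omega
  · intro h i hi
    have := h i ⟨(i : ℕ) + 1, hi⟩ rfl
    rw [lt_abs]
    omega

open Classical in
theorem card_eq_sum {α R : Type*} [Fintype α] [CommRing R] (P : α → Prop) :
    ((Nat.card {x // P x} : ℕ) : R) = ∑ x, if P x then 1 else 0 := by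
  rw [Nat.card_eq_fintype_card, Fintype.card_subtype, Finset.sum_boole]

theorem prepend_king {n : ℕ} (e : Equiv.Perm (Fin n)) :
    IsKing (Equiv.Perm.decomposeFin.symm (0, e)) ↔ IsKing e ∧ ¬ StartMin e := by
  have h0 : Equiv.Perm.decomposeFin.symm (0, e) 0 = 0 := by simp
  have hs : ∀ i : Fin n, Equiv.Perm.decomposeFin.symm (0, e) i.succ = (e i).succ := by
    intro i; simp
  rw [isKing_iff, isKing_iff]
  constructor
  · intro h
    refine ⟨fun i j hij => ?_, ?_⟩
    · have := h i.succ j.succ (by simp [hij])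
      rw [hs, hs] at this
      simpa using this
    · rintro ⟨i, hi, hi'⟩
      have := h 0 i.succ (by simp [hi])
      rw [h0, hs] at this
      simp [hi'] at this
  · rintro ⟨h, hm⟩ i j hij
    cases j using Fin.cases with
    | zero => simp at hij
    | succ j =>
      cases i using Fin.cases with
      | zero =>
        rw [h0, hs]
        left
        have : (e j : ℕ) ≠ 0 := fun hh => hm ⟨j, by simpa using hij, hh⟩
        simp
        omega
      | succ i =>
        rw [hs, hs]
        have := h i j (by simpa using hij)
        simpa using this

theorem minCount_rec (n : ℕ) : minCount (n + 1) + minCount n = kingCount n := by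
  classical
  have h1 : minCount (n + 1) =
      Nat.card {e : Equiv.Perm (Fin n) // IsKing e ∧ ¬ StartMin e} := by
    symm
    unfold minCount
    refine Nat.card_congr (Equiv.ofBijective
      (fun e => ⟨Equiv.Perm.decomposeFin.symm (0, e.1), (prepend_king e.1).2 e.2,
        0, rfl, by simp⟩) ⟨?_, ?_⟩)
    · intro a b hab
      have := congrArg Subtype.val hab
      simp only [EmbeddingLike.apply_eq_iff_eq, Prod.mk.injEq, true_and] at this
      exact Subtype.ext this
    · rintro ⟨σ, hk, i, hi, hi'⟩
      obtain ⟨⟨a, e⟩, rfl⟩ := Equiv.Perm.decomposeFin.symm.surjective σ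
      have : i = 0 := Fin.ext hi
      subst this
      have ha : a = 0 := by
        apply Fin.ext
        simpa using hi'
      subst ha
      exact ⟨⟨e, (prepend_king e).1 hk⟩, rfl⟩
  have h : ((minCount (n + 1) + minCount n : ℕ) : ℤ) = kingCount n := by
    push_cast
    rw [h1]
    unfold minCount kingCount
    rw [card_eq_sum, card_eq_sum, card_eq_sum, ← Finset.sum_add_distrib]
    refine Finset.sum_congr rfl fun σ _ => ?_
    by_cases hk : IsKing σ <;> by_cases hm : StartMin σ <;> simp [hk, hm]
  exact_mod_cast h

theorem minCount_zero : minCount 0 = 0 := by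
  unfold minCount
  rw [Nat.card_eq_zero]
  left
  exact ⟨fun ⟨_, _, i, _⟩ => i.elim0⟩

theorem kingCount_zero : kingCount 0 = 1 := by
  unfold kingCount
  rw [Nat.card_eq_one_iff_unique]
  exact ⟨⟨fun a b => Subtype.ext (Subsingleton.elim _ _)⟩, ⟨⟨1, fun i => i.elim0⟩⟩⟩

theorem minCount_one : minCount 1 = 1 := by
  have := minCount_rec 0
  rw [minCount_zero, kingCount_zero] at this
  simpa using this

theorem maxCount_eq (n : ℕ) :
    Nat.card {σ : Equiv.Perm (Fin n) // IsKing σ ∧ StartMax σ} = minCount n := by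
  unfold minCount
  refine Nat.card_congr (Equiv.subtypeEquiv (Equiv.mulLeft Fin.revPerm) fun σ => ?_)
  have hv : ∀ i, ((Equiv.mulLeft Fin.revPerm σ) i : ℕ) = n - (σ i + 1) := by
    intro i; simp [Fin.val_rev]
  rw [isKing_iff, isKing_iff]
  unfold StartMin StartMax
  simp only [hv]
  refine and_congr (forall_congr' fun i => forall_congr' fun j => imp_congr_right fun _ => ?_)
    (exists_congr fun i => and_congr_right fun _ => ?_)
  · have := (σ i).isLt
    have := (σ j).isLt
    omega
  · have := (σ i).isLt
    omega

def dsum {p q : ℕ} (π : Equiv.Perm (Fin p)) (τ : Equiv.Perm (Fin q)) :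
    Equiv.Perm (Fin (p + q)) :=
  finSumFinEquiv.permCongr (Equiv.sumCongr π τ)

theorem dsum_left {p q : ℕ} (π : Equiv.Perm (Fin p)) (τ : Equiv.Perm (Fin q)) (i : Fin p) :
    dsum π τ (Fin.castAdd q i) = Fin.castAdd q (π i) := by
  simp [dsum, Equiv.permCongr_apply]

theorem dsum_right {p q : ℕ} (π : Equiv.Perm (Fin p)) (τ : Equiv.Perm (Fin q)) (i : Fin q) :
    dsum π τ (Fin.natAdd p i) = Fin.natAdd p (τ i) := by
  simp [dsum, Equiv.permCongr_apply]

theorem dsum_inj {p q : ℕ} {π π' : Equiv.Perm (Fin p)} {τ τ' : Equiv.Perm (Fin q)}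
    (h : dsum π τ = dsum π' τ') : π = π' ∧ τ = τ' := by
  constructor
  · ext i
    have := congrArg (fun f => (f (Fin.castAdd q i) : ℕ)) h
    simpa [dsum_left] using this
  · ext i
    have := congrArg (fun f => (f (Fin.natAdd p i) : ℕ)) h
    simpa [dsum_right] using this

theorem dsum_surj {p q : ℕ} (σ : Equiv.Perm (Fin (p + q)))
    (h : ∀ i : Fin (p + q), (i : ℕ) < p → (σ i : ℕ) < p) :
    ∃ π τ, σ = dsum π τ := by
  have := Equiv.Perm.mem_sumCongrHom_range_of_perm_mapsTo_inl
    (σ := finSumFinEquiv.symm.permCongr σ) (by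
      rintro _ ⟨i, rfl⟩
      have h1 := h (Fin.castAdd q i) (by simp)
      refine ⟨⟨_, h1⟩, ?_⟩
      rw [Equiv.permCongr_apply]
      simp [Equiv.eq_symm_apply])
  obtain ⟨⟨π, τ⟩, h2⟩ := this
  refine ⟨π, τ, ?_⟩
  have h3 : Equiv.sumCongr π τ = finSumFinEquiv.symm.permCongr σ := h2
  unfold dsum
  rw [h3]
  ext x
  simp [Equiv.permCongr_apply]

theorem occP_facts {n : ℕ} {σ : Equiv.Perm (Fin n)} {i j : Fin n} (h : OccP σ i j) :
    (i : ℕ) = 0 ∧ (σ i : ℕ) + 1 = j ∧ (∀ k, k < j → (σ k : ℕ) < j) := by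
  obtain ⟨hij, hs, h0, h1, h2⟩ := h
  have hi : (i : ℕ) = 0 := by
    by_contra hne
    exact h0 ⟨0, by have := i.isLt; omega⟩ (by rw [Fin.lt_def]; simp; omega)
  have key : ∀ k, k < j ↔ σ k ≤ σ i := by
    intro k
    constructor
    · intro hk
      rcases lt_trichotomy k i with h | h | h
      · exact absurd h (h0 k)
      · rw [h]
      · exact (h1 k h hk).le
    · intro hk
      by_contra hlt
      rcases (not_lt.1 hlt).eq_or_lt with h | h
      · subst h
        exact absurd hk (not_le.2 hs)
      · exact absurd hk (not_le.2 (hs.trans (h2 k h)))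
  have hc : (Finset.Iio j).map σ.toEmbedding = Finset.Iic (σ i) := by
    ext v
    simp only [Finset.mem_map_equiv, Finset.mem_Iio, Finset.mem_Iic, key]
    simp
  have hc' := congrArg Finset.card hc
  rw [Finset.card_map, Fin.card_Iio, Fin.card_Iic] at hc'
  refine ⟨hi, hc'.symm, fun k hk => ?_⟩
  have := (key k).1 hk
  rw [Fin.le_def] at this
  omega

theorem occAt_dsum {p q : ℕ} (π : Equiv.Perm (Fin p)) (τ : Equiv.Perm (Fin q)) :
    OccAt p (dsum π τ) ↔ StartMax π ∧ StartMin τ := by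
  constructor
  · rintro ⟨i, j, hj, h⟩
    obtain ⟨hi, hij, -⟩ := occP_facts h
    obtain ⟨hlt, hs, h0, h1, h2⟩ := h
    rw [Fin.lt_def] at hlt
    cases j using Fin.addCases with
    | left j => simp at hj; omega
    | right j =>
      cases i using Fin.addCases with
      | right i => simp at hi hj hlt; omega
      | left i =>
        simp only [dsum_left, dsum_right, Fin.val_castAdd, Fin.val_natAdd] at hi hj hij
        refine ⟨⟨i, hi, by omega⟩, ⟨j, by omega, ?_⟩⟩
        by_contra hne
        let z : Fin q := ⟨0, j.pos⟩
        have hz := (τ.apply_symm_apply z)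
        have hk := h2 (Fin.natAdd p (τ.symm z)) (by
          rw [Fin.lt_def]
          simp only [Fin.val_natAdd]
          have : (τ.symm z : ℕ) ≠ 0 := by
            intro h
            have : τ.symm z = j := Fin.ext (by omega)
            rw [this] at hz
            rw [hz] at hne
            exact hne rfl
          omega)
        rw [dsum_right, dsum_right, hz, Fin.lt_def] at hk
        simp [z] at hk
  · rintro ⟨⟨i, hi, hi'⟩, ⟨j, hj, hj'⟩⟩
    refine ⟨Fin.castAdd q i, Fin.natAdd p j, by simp [hj], ?_, ?_, ?_, ?_, ?_⟩
    · rw [Fin.lt_def]; simp; omega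
    · rw [dsum_left, dsum_right, Fin.lt_def]; simp; omega
    · intro k; rw [Fin.lt_def]; simp [hi]
    · intro k hk hk'
      cases k using Fin.addCases with
      | right k => rw [Fin.lt_def] at hk'; simp at hk'; omega
      | left k =>
        rw [dsum_left, dsum_left, Fin.lt_def]
        have hne : π k ≠ π i := by
          intro h
          rw [π.injective h] at hk
          exact lt_irrefl _ hk
        have := (π k).isLt
        have : (π k : ℕ) ≠ π i := fun h => hne (Fin.ext h)
        simp
        omega
    · intro k hk
      cases k using Fin.addCases with
      | left k => rw [Fin.lt_def] at hk; simp at hk; omega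
      | right k =>
        rw [dsum_right, dsum_right, Fin.lt_def]
        have hne : τ k ≠ τ j := by
          intro h
          rw [τ.injective h] at hk
          exact lt_irrefl _ hk
        have : (τ k : ℕ) ≠ τ j := fun h => hne (Fin.ext h)
        simp
        omega

theorem king_dsum {p q : ℕ} (π : Equiv.Perm (Fin p)) (τ : Equiv.Perm (Fin q))
    (hπ : StartMax π) (hτ : StartMin τ) :
    IsKing (dsum π τ) ↔ (IsKing π ∧ p ≠ 1) ∧ IsKing τ := by
  obtain ⟨a, ha, ha'⟩ := hπ
  obtain ⟨b, hb, hb'⟩ := hτ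
  rw [isKing_iff, isKing_iff, isKing_iff]
  constructor
  · intro h
    refine ⟨⟨fun i j hij => ?_, ?_⟩, fun i j hij => ?_⟩
    · have := h (Fin.castAdd q i) (Fin.castAdd q j) (by simpa using hij)
      simpa [dsum_left] using this
    · intro hp
      have := h (Fin.castAdd q a) (Fin.natAdd p b) (by simp; omega)
      simp only [dsum_left, dsum_right, Fin.val_castAdd, Fin.val_natAdd] at this
      omega
    · have := h (Fin.natAdd p i) (Fin.natAdd p j) (by simp; omega)
      simp only [dsum_right, Fin.val_natAdd] at this
      omega
  · rintro ⟨⟨h1, hp⟩, h2⟩ i j hij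
    cases i using Fin.addCases with
    | left i =>
      cases j using Fin.addCases with
      | left j =>
        have := h1 i j (by simpa using hij)
        simpa [dsum_left] using this
      | right j =>
        simp only [Fin.val_castAdd, Fin.val_natAdd] at hij
        simp only [dsum_left, dsum_right, Fin.val_castAdd, Fin.val_natAdd]
        have hi := i.isLt
        have hjb : j = b := Fin.ext (by omega)
        subst hjb
        have hne : (π i : ℕ) ≠ π a := by
          intro h
          have := congrArg Fin.val (π.injective (Fin.ext h))
          omega
        have := (π i).isLt
        omega
    | right i =>
      cases j using Fin.addCases with
      | left j => simp at hij; omega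
      | right j =>
        simp only [Fin.val_natAdd] at hij
        have := h2 i j (by omega)
        simp only [dsum_right, Fin.val_natAdd]
        omega

theorem card_occAt (p q : ℕ) :
    Nat.card {σ : Equiv.Perm (Fin (p + q)) // IsKing σ ∧ OccAt p σ}
      = (if p = 1 then 0 else minCount p) * minCount q := by
  have h1 : Nat.card {π : Equiv.Perm (Fin p) // (IsKing π ∧ p ≠ 1) ∧ StartMax π}
      = if p = 1 then 0 else minCount p := by
    split_ifs with h
    · rw [Nat.card_eq_zero]
      left
      exact ⟨fun x => x.2.1.2 h⟩
    · rw [← maxCount_eq]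
      simp [h]
  rw [← h1]
  unfold minCount
  rw [← Nat.card_prod]
  symm
  refine Nat.card_congr (Equiv.ofBijective
    (fun x => ⟨dsum x.1.1 x.2.1,
      (king_dsum _ _ x.1.2.2 x.2.2.2).2 ⟨x.1.2.1, x.2.2.1⟩,
      (occAt_dsum _ _).2 ⟨x.1.2.2, x.2.2.2⟩⟩) ⟨?_, ?_⟩)
  · rintro ⟨⟨π, _⟩, ⟨τ, _⟩⟩ ⟨⟨π', _⟩, ⟨τ', _⟩⟩ h
    have := congrArg Subtype.val h
    obtain ⟨h1, h2⟩ := dsum_inj this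
    subst h1 h2
    rfl
  · rintro ⟨σ, hk, ho⟩
    have hm : ∀ i : Fin (p + q), (i : ℕ) < p → (σ i : ℕ) < p := by
      obtain ⟨i, j, hj, h⟩ := ho
      obtain ⟨-, -, h3⟩ := occP_facts h
      intro k hk
      have := h3 k (by rw [Fin.lt_def]; omega)
      omega
    obtain ⟨π, τ, rfl⟩ := dsum_surj σ hm
    obtain ⟨h2, h3⟩ := (occAt_dsum _ _).1 ho
    obtain ⟨h4, h5⟩ := (king_dsum _ _ h2 h3).1 hk
    exact ⟨⟨⟨π, h4, h2⟩, ⟨τ, h5, h3⟩⟩, rfl⟩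

theorem occP_unique {n : ℕ} {σ : Equiv.Perm (Fin n)} {i j i' j' : Fin n}
    (h : OccP σ i j) (h' : OccP σ i' j') : i = i' ∧ j = j' := by
  obtain ⟨a, b, -⟩ := occP_facts h
  obtain ⟨a', b', -⟩ := occP_facts h'
  have : i = i' := Fin.ext (by omega)
  subst this
  exact ⟨rfl, Fin.ext (by omega)⟩

open Classical in
theorem pow_occ {n : ℕ} (σ : Equiv.Perm (Fin n)) :
    (Polynomial.X : Polynomial ℚ) ^ occP σ = 1 - (1 - Polynomial.X) *
      ∑ pq ∈ Finset.HasAntidiagonal.antidiagonal n, if OccAt pq.1 σ then 1 else 0 := by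
  by_cases h : ∃ i j, OccP σ i j
  · obtain ⟨i, j, h⟩ := h
    have h1 : occP σ = 1 := by
      unfold occP
      rw [Nat.card_eq_one_iff_unique]
      refine ⟨⟨fun a b => Subtype.ext ?_⟩, ⟨⟨(i, j), h⟩⟩⟩
      obtain ⟨h1, h2⟩ := occP_unique a.2 b.2
      exact Prod.ext h1 h2
    have hj := j.isLt
    rw [h1, Finset.sum_eq_single ((j : ℕ), n - j)]
    · rw [if_pos ⟨i, j, rfl, h⟩]
      ring
    · rintro ⟨p, q⟩ hpq hne
      rw [if_neg]
      rintro ⟨i', j', hj', h'⟩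
      obtain ⟨-, h2⟩ := occP_unique h h'
      subst h2
      rw [Finset.HasAntidiagonal.mem_antidiagonal] at hpq
      apply hne
      simp only at hj' hpq
      ext <;> simp <;> omega
    · intro h
      exact absurd (Finset.HasAntidiagonal.mem_antidiagonal.2 (by simp)) h
  · have h1 : occP σ = 0 := by
      unfold occP
      rw [Nat.card_eq_zero]
      left
      exact ⟨fun x => h ⟨_, _, x.2⟩⟩
    rw [h1, Finset.sum_eq_zero]
    · simp
    · rintro pq _
      rw [if_neg]
      rintro ⟨i, j, _, h'⟩
      exact h ⟨i, j, h'⟩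

noncomputable def minSer : PowerSeries (Polynomial ℚ) :=
  PowerSeries.mk fun n => (minCount n : Polynomial ℚ)

theorem minSer_eq : (1 + T) * minSer = T * kingAu := by
  ext1 n
  rw [add_mul, one_mul, map_add]
  unfold T minSer kingAu
  cases n with
  | zero => simp [minCount_zero]
  | succ n =>
    rw [PowerSeries.coeff_succ_X_mul, PowerSeries.coeff_succ_X_mul]
    simp only [PowerSeries.coeff_mk]
    rw [← minCount_rec]
    push_cast
    ring

theorem minSer_sub : minSer - T =
    PowerSeries.mk fun p => ((if p = 1 then 0 else minCount p : ℕ) : Polynomial ℚ) := by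
  ext1 n
  unfold minSer T
  rw [map_sub, PowerSeries.coeff_mk, PowerSeries.coeff_mk, PowerSeries.coeff_X]
  split_ifs with h
  · subst h
    simp [minCount_one]
  · simp

theorem Etu_eq : Etu = kingAu - (1 - U) * ((minSer - T) * minSer) := by
  classical
  have hU : (1 - U) = PowerSeries.C (R := Polynomial ℚ) (1 - Polynomial.X) := by
    simp [U]
  rw [hU, minSer_sub]
  ext1 n
  rw [map_sub, PowerSeries.coeff_C_mul, PowerSeries.coeff_mul]
  unfold Etu kingAu minSer
  simp only [PowerSeries.coeff_mk]
  have h : ∀ pq ∈ Finset.HasAntidiagonal.antidiagonal n,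
      ((if pq.1 = 1 then 0 else minCount pq.1 : ℕ) : Polynomial ℚ) * (minCount pq.2 : Polynomial ℚ)
        = ∑ σ : Equiv.Perm (Fin n), if IsKing σ ∧ OccAt pq.1 σ then 1 else 0 := by
    rintro ⟨p, q⟩ hpq
    rw [Finset.HasAntidiagonal.mem_antidiagonal] at hpq
    simp only at hpq
    subst hpq
    rw [← Nat.cast_mul, ← card_occAt, card_eq_sum]
    exact Finset.sum_congr rfl fun σ _ => by congr
  rw [Finset.sum_congr rfl h, Finset.sum_comm]
  unfold kingCount
  rw [card_eq_sum, Finset.mul_sum, ← Finset.sum_sub_distrib]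
  refine Finset.sum_congr rfl fun σ _ => ?_
  by_cases hk : IsKing σ
  · simp only [hk, if_true, true_and]
    exact pow_occ σ
  · simp [hk]

theorem statement_10 :
    (1 + T) ^ 2 * Etu
      = ((1 + T) ^ 2 + T ^ 2 * (1 - U) * (1 + T) - T ^ 2 * (1 - U) * kingAu)
          * kingAu := by
  rw [Etu_eq]
  have h := minSer_eq
  linear_combination (-(1 - U) * ((1 + T) * minSer + T * kingAu) + (1 - U) * T * (1 + T)) * h
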